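/- Let L, and for each layer ℓ ∈ {1,…,L}, dimensions d_out(ℓ), d_in(ℓ), r(ℓ) be positive integers, and let A_ℓ ∈ ℝ^{d_in(ℓ)×r(ℓ)} have orthonormal columns (A_ℓᵀA_ℓ = I). Fix a layer ℓ. There exists a constant c_ℓ > 0, depending only on the dimensions, such that for every Lip ≥ 0, every differentiable f with Lip-Lipschitz gradient, every μ > 0, and every point W satisfying ∇_{W_ℓ} f(W)·A_ℓA_ℓᵀ = ∇_{W_ℓ} f(W) (i.e., the row space of the true layer gradient at W lies in span(A_ℓ)), one has ‖ E_R[ ((f(W + μΔ(R)) − f(W))/μ) · R_ℓA_ℓᵀ ] − ∇_{W_ℓ} f(W) ‖_F ≤ c_ℓ · Lip · μ. In particular, the AGZO estimator is an asymptotically unbiased estimator of the true layer gradient as μ → 0. -/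

import Mathlib

open MeasureTheory ProbabilityTheory Matrix

attribute [local instance] Matrix.frobeniusNormedAddCommGroup Matrix.frobeniusNormedSpace
attribute [-instance] instTopologicalSpaceMatrix Matrix.instUniformSpace

noncomputable section

/-- Entrywise expectation of a matrix-valued function. -/
def matExp {Ω : Type*} [MeasurableSpace Ω] (P : Measure Ω)
    {ι κ : Type*} (F : Ω → Matrix ι κ ℝ) : Matrix ι κ ℝ :=
  Matrix.of fun i j => ∫ ω, F ω i j ∂P

variable {L : ℕ} {dout din r : Fin L → ℕ}

/-- The block of the (Frobenius) gradient of `f` corresponding to layer `ℓ`: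
its `(i,j)` entry is the partial derivative of `f` in the direction of the
standard basis matrix `E_{ij}` of layer `ℓ`. -/
def gradBlock (f : ((ℓ : Fin L) → Matrix (Fin (dout ℓ)) (Fin (din ℓ)) ℝ) → ℝ)
    (W : (ℓ : Fin L) → Matrix (Fin (dout ℓ)) (Fin (din ℓ)) ℝ) (ℓ : Fin L) :
    Matrix (Fin (dout ℓ)) (Fin (din ℓ)) ℝ :=
  Matrix.of fun i j => fderiv ℝ f W (Pi.single ℓ (Matrix.single i j 1))

/-- The product of standard Gaussian measures over all entries of all blocks
`R_ℓ ∈ ℝ^{dout(ℓ) × r(ℓ)}` (i.i.d. standard Gaussian entries). -/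
def gaussBlocks (dout r : Fin L → ℕ) :
    Measure ((ℓ : Fin L) → Fin (dout ℓ) → Fin (r ℓ) → ℝ) :=
  Measure.pi fun _ => Measure.pi fun _ => Measure.pi fun _ => gaussianReal 0 1

/-- The AGZO perturbation `Δ(R) = (R₁A₁ᵀ, …, R_L A_Lᵀ)`. -/
def perturbA (A : (ℓ : Fin L) → Matrix (Fin (din ℓ)) (Fin (r ℓ)) ℝ)
    (R : (ℓ : Fin L) → Fin (dout ℓ) → Fin (r ℓ) → ℝ) :
    (ℓ : Fin L) → Matrix (Fin (dout ℓ)) (Fin (din ℓ)) ℝ :=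
  fun ℓ => Matrix.of (R ℓ) * (A ℓ)ᵀ

/-- The subspace-smoothed objective `f_{μ,A}(W) = E_R[f(W + μΔ(R))]`. -/
def smoothedA (f : ((ℓ : Fin L) → Matrix (Fin (dout ℓ)) (Fin (din ℓ)) ℝ) → ℝ)
    (μ : ℝ) (A : (ℓ : Fin L) → Matrix (Fin (din ℓ)) (Fin (r ℓ)) ℝ)
    (W : (ℓ : Fin L) → Matrix (Fin (dout ℓ)) (Fin (din ℓ)) ℝ) : ℝ :=
  ∫ R, f (W + μ • perturbA A R) ∂(gaussBlocks dout r)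

/-! For a noise vector `X` with finite third moment, a first-order Taylor expansion with
`K`-Lipschitz derivative shows that replacing the difference quotient in
`((f (W + μ • X) - f W) / μ) • X` by `fderiv ℝ f W X` changes the expectation by at most
`K * μ * 𝔼[‖X‖ ^ 3]`. For `X = Δ(R)` the entries of `R` are uncorrelated, centred and of unit
variance, so the linearised estimator has expectation `∇_{W_ℓ} f(W) A_ℓ A_ℓᵀ`. Since `A_ℓ` has
orthonormal columns, `M ↦ M A_ℓᵀ` preserves the Frobenius norm, which makes the third moment of
`Δ(R)` independent of `A`. -/

open scoped NNReal

section TwoPointEstimator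

variable {E F : Type*} [NormedAddCommGroup E] [NormedSpace ℝ E]
  [NormedAddCommGroup F] [NormedSpace ℝ F]

theorem norm_image_add_sub_sub_fderiv_le {f : E → F} {K : ℝ≥0} (hf : Differentiable ℝ f)
    (hK : LipschitzWith K (fderiv ℝ f)) (x h : E) :
    ‖f (x + h) - f x - fderiv ℝ f x h‖ ≤ K * ‖h‖ ^ 2 := by
  have hbound : ∀ y ∈ Metric.closedBall x ‖h‖, ‖fderiv ℝ f y - fderiv ℝ f x‖ ≤ K * ‖h‖ := by
    intro y hy
    exact (hK.norm_sub_le y x).trans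
      (mul_le_mul_of_nonneg_left (mem_closedBall_iff_norm.1 hy) K.coe_nonneg)
  have hmvt := (convex_closedBall x ‖h‖).norm_image_sub_le_of_norm_fderiv_le'
    (y := x + h) (fun y _ ↦ hf y) hbound (Metric.mem_closedBall_self (norm_nonneg h)) (by simp)
  simpa only [add_sub_cancel_left, sq, mul_assoc] using hmvt

variable {Ω : Type*} [MeasurableSpace Ω] {P : Measure Ω} {X : Ω → E}

theorem integrable_clm_smul_self (hX : MemLp X 2 P) (φ : E →L[ℝ] ℝ) :
    Integrable (fun ω ↦ φ (X ω) • X ω) P :=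
  memLp_one_iff_integrable.1 (hX.smul (φ.comp_memLp' hX))

variable {f : E → ℝ} {K : ℝ≥0} {μ : ℝ}

theorem norm_twoPoint_smul_sub_fderiv_smul_le (hf : Differentiable ℝ f)
    (hK : LipschitzWith K (fderiv ℝ f)) (hμ : 0 < μ) (x v : E) :
    ‖((f (x + μ • v) - f x) / μ) • v - fderiv ℝ f x v • v‖ ≤ K * μ * ‖v‖ ^ 3 := by
  have hquot : (f (x + μ • v) - f x) / μ - fderiv ℝ f x v =
      (f (x + μ • v) - f x - fderiv ℝ f x (μ • v)) / μ := by
    rw [map_smul, smul_eq_mul]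
    field_simp
  calc ‖((f (x + μ • v) - f x) / μ) • v - fderiv ℝ f x v • v‖
      = ‖f (x + μ • v) - f x - fderiv ℝ f x (μ • v)‖ / μ * ‖v‖ := by
        rw [← sub_smul, norm_smul, hquot, norm_div, Real.norm_of_nonneg hμ.le]
    _ ≤ K * ‖μ • v‖ ^ 2 / μ * ‖v‖ := by
        gcongr
        exact norm_image_add_sub_sub_fderiv_le hf hK x (μ • v)
    _ = K * μ * ‖v‖ ^ 3 := by
        rw [norm_smul, Real.norm_of_nonneg hμ.le]
        field_simp

theorem integrable_twoPoint_smul_sub (hX : MemLp X 3 P) (hf : Differentiable ℝ f)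
    (hK : LipschitzWith K (fderiv ℝ f)) (hμ : 0 < μ) (x : E) :
    Integrable (fun ω ↦ ((f (x + μ • X ω) - f x) / μ) • X ω - fderiv ℝ f x (X ω) • X ω) P := by
  have hcont : Continuous fun v ↦ ((f (x + μ • v) - f x) / μ) • v - fderiv ℝ f x v • v := by
    have := hf.continuous
    fun_prop
  exact ((hX.integrable_norm_pow (by norm_num)).const_mul (K * μ)).mono'
    (hcont.comp_aestronglyMeasurable hX.aestronglyMeasurable)
    (.of_forall fun ω ↦ norm_twoPoint_smul_sub_fderiv_smul_le hf hK hμ x (X ω))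

variable [IsFiniteMeasure P]

theorem integrable_twoPoint_smul (hX : MemLp X 3 P) (hf : Differentiable ℝ f)
    (hK : LipschitzWith K (fderiv ℝ f)) (hμ : 0 < μ) (x : E) :
    Integrable (fun ω ↦ ((f (x + μ • X ω) - f x) / μ) • X ω) P := by
  have hlin := integrable_clm_smul_self (hX.mono_exponent (by norm_num)) (fderiv ℝ f x)
  exact ((integrable_twoPoint_smul_sub hX hf hK hμ x).add hlin).congr
    (.of_forall fun _ ↦ sub_add_cancel _ _)

theorem norm_integral_twoPoint_smul_sub_le (hX : MemLp X 3 P) (hf : Differentiable ℝ f)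
    (hK : LipschitzWith K (fderiv ℝ f)) (hμ : 0 < μ) (x : E) :
    ‖(∫ ω, ((f (x + μ • X ω) - f x) / μ) • X ω ∂P) - ∫ ω, fderiv ℝ f x (X ω) • X ω ∂P‖
      ≤ K * μ * ∫ ω, ‖X ω‖ ^ 3 ∂P := by
  have hlin := integrable_clm_smul_self (hX.mono_exponent (by norm_num)) (fderiv ℝ f x)
  rw [← integral_sub (integrable_twoPoint_smul hX hf hK hμ x) hlin, ← integral_const_mul]
  exact norm_integral_le_of_norm_le ((hX.integrable_norm_pow (by norm_num)).const_mul _)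
    (.of_forall fun ω ↦ norm_twoPoint_smul_sub_fderiv_smul_le hf hK hμ x (X ω))

end TwoPointEstimator

section ProductMeasure

variable {ι : Type*} [Fintype ι] {E : ι → Type*} [∀ i, NormedAddCommGroup (E i)]
  [∀ i, MeasurableSpace (E i)] {μ : ∀ i, Measure (E i)} [∀ i, IsProbabilityMeasure (μ i)]

theorem memLp_id_pi {p : ENNReal} (hμ : ∀ i, MemLp id p (μ i)) : MemLp id p (Measure.pi μ) :=
  .of_eval fun i ↦ (hμ i).comp_measurePreserving (measurePreserving_eval μ i)

variable [∀ i, NormedSpace ℝ (E i)]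

theorem integral_clm_mul_clm_eval_pi [DecidableEq ι] (hμ : ∀ i, MemLp id 2 (μ i))
    (φ : (∀ i, E i) →L[ℝ] ℝ) (i : ι) (ψ : E i →L[ℝ] ℝ) (hψ : ∫ y, ψ y ∂μ i = 0) :
    ∫ x, φ x * ψ (x i) ∂Measure.pi μ = ∫ y, φ (Pi.single i y) * ψ y ∂μ i := by
  let φ' (j : ι) : E j →L[ℝ] ℝ := φ ∘L ContinuousLinearMap.single ℝ E j
  have hφ (x : ∀ j, E j) : φ x = ∑ j, φ' j (x j) := by
    conv_lhs => rw [← Finset.univ_sum_single x, map_sum]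
    rfl
  have hmeas (j : ι) (χ : E j →L[ℝ] ℝ) : AEStronglyMeasurable χ (μ j) :=
    (χ.comp_memLp' (hμ j)).aestronglyMeasurable
  have heval (j : ι) (χ : E j →L[ℝ] ℝ) : MemLp (fun x : ∀ j, E j ↦ χ (x j)) 2 (Measure.pi μ) :=
    (χ.comp_memLp' (hμ j)).comp_measurePreserving (measurePreserving_eval μ j)
  have hcross (j : ι) (hji : j ≠ i) : ∫ x, φ' j (x j) * ψ (x i) ∂Measure.pi μ = 0 := by
    have hindep := (iIndepFun_pi (μ := μ) (X := fun _ ↦ id) fun _ ↦ aemeasurable_id).indepFun hji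
    have hmap (k : ι) := (measurePreserving_eval μ k).map_eq
    calc ∫ x, φ' j (x j) * ψ (x i) ∂Measure.pi μ
        = (∫ x, φ' j (x j) ∂Measure.pi μ) * ∫ x, ψ (x i) ∂Measure.pi μ :=
          hindep.integral_fun_comp_mul_comp (measurable_pi_apply j).aemeasurable
            (measurable_pi_apply i).aemeasurable ((hmap j).symm ▸ hmeas j (φ' j))
            ((hmap i).symm ▸ hmeas i ψ)
      _ = 0 := by rw [integral_comp_eval (hmeas i ψ), hψ, mul_zero]
  calc ∫ x, φ x * ψ (x i) ∂Measure.pi μ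
      = ∑ j, ∫ x, φ' j (x j) * ψ (x i) ∂Measure.pi μ := by
        simp_rw [hφ, Finset.sum_mul]
        exact integral_finsetSum _ fun j _ ↦ (heval j (φ' j)).integrable_mul (heval i ψ)
    _ = ∫ x, φ' i (x i) * ψ (x i) ∂Measure.pi μ :=
        Fintype.sum_eq_single i hcross
    _ = ∫ y, φ (Pi.single i y) * ψ y ∂μ i :=
        integral_comp_eval ((hmeas i (φ' i)).mul (hmeas i ψ))

end ProductMeasure

section Frobenius

variable {l m n : Type*} [Fintype l] [Fintype m] [Fintype n]

theorem frobenius_norm_sq_eq_trace (M : Matrix m n ℝ) : ‖M‖ ^ 2 = trace (M * Mᵀ) := by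
  rw [frobenius_norm_def, ← Real.sqrt_eq_rpow, Real.sq_sqrt (by positivity)]
  simp [trace, mul_apply, sq]

theorem frobenius_norm_mul_transpose_of_orthonormal [DecidableEq n] {A : Matrix m n ℝ}
    (hA : Aᵀ * A = 1) (M : Matrix l n ℝ) : ‖M * Aᵀ‖ = ‖M‖ := by
  rw [← sq_eq_sq₀ (norm_nonneg _) (norm_nonneg _), frobenius_norm_sq_eq_trace,
    frobenius_norm_sq_eq_trace, transpose_mul, transpose_transpose, Matrix.mul_assoc,
    ← Matrix.mul_assoc Aᵀ, hA, Matrix.one_mul]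

end Frobenius

section MatExp

variable {Ω : Type*} [MeasurableSpace Ω] {P : Measure Ω} {l m n : Type*} [Fintype m]

theorem matExp_eq_integral [Fintype n] {F : Ω → Matrix m n ℝ} (hF : Integrable F P) :
    matExp P F = ∫ ω, F ω ∂P := by
  have := FiniteDimensional.complete ℝ (Matrix m n ℝ)
  ext i j
  exact (entryLinearMap ℝ ℝ i j).toContinuousLinearMap.integral_comp_comm hF

theorem matExp_mul_const {F : Ω → Matrix l m ℝ} (hF : ∀ i k, Integrable (fun ω ↦ F ω i k) P)
    (B : Matrix m n ℝ) : matExp P (fun ω ↦ F ω * B) = matExp P F * B := by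
  ext i j
  simp only [matExp, of_apply, mul_apply]
  rw [integral_finsetSum _ fun k _ ↦ (hF i k).mul_const _]
  simp_rw [integral_mul_const]

theorem matExp_eval_eq_integral_eval {ι : Type*} [Fintype ι] {p q : ι → Type*}
    [∀ i, Fintype (p i)] [∀ i, Fintype (q i)] {F : Ω → (i : ι) → Matrix (p i) (q i) ℝ}
    (hF : Integrable F P) (i : ι) : matExp P (fun ω ↦ F ω i) = (∫ ω, F ω ∂P) i := by
  have (j : ι) := FiniteDimensional.complete ℝ (Matrix (p j) (q j) ℝ)
  rw [matExp_eq_integral (hF.eval i), eval_integral fun j ↦ hF.eval j]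

end MatExp

section GaussBlocks

theorem memLp_id_gaussBlocks (p : ℝ≥0) : MemLp id p (gaussBlocks dout r) :=
  memLp_id_pi fun _ ↦ memLp_id_pi fun _ ↦ memLp_id_pi fun _ ↦ memLp_id_gaussianReal p

instance : IsProbabilityMeasure (gaussBlocks dout r) := by
  unfold gaussBlocks
  infer_instance

theorem integral_mul_self_gaussianReal_zero_one : ∫ x, x * x ∂gaussianReal 0 1 = 1 := by
  have hvar := variance_id_gaussianReal (μ := 0) (v := 1)
  rw [variance_of_integral_eq_zero aemeasurable_id integral_id_gaussianReal] at hvar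
  simpa [sq] using hvar

theorem integral_clm_mul_apply_gaussBlocks
    (φ : ((ℓ : Fin L) → Fin (dout ℓ) → Fin (r ℓ) → ℝ) →L[ℝ] ℝ)
    (ℓ : Fin L) (i : Fin (dout ℓ)) (k : Fin (r ℓ)) :
    ∫ R, φ R * R ℓ i k ∂gaussBlocks dout r =
      φ (Pi.single ℓ (Pi.single i (Pi.single k 1))) := by
  let γ : Measure ℝ := gaussianReal 0 1
  have hentry : MemLp id 2 γ := memLp_id_gaussianReal 2
  have hrow (n : ℕ) : MemLp id 2 (Measure.pi fun _ : Fin n ↦ γ) := memLp_id_pi fun _ ↦ hentry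
  have hblock (m n : ℕ) : MemLp id 2 (Measure.pi fun _ : Fin m ↦ Measure.pi fun _ : Fin n ↦ γ) :=
    memLp_id_pi fun _ ↦ hrow n
  let π₁ : (Fin (r ℓ) → ℝ) →L[ℝ] ℝ := .proj k
  let π₂ : (Fin (dout ℓ) → Fin (r ℓ) → ℝ) →L[ℝ] ℝ := π₁ ∘L .proj i
  have hmean₀ : ∫ t, ContinuousLinearMap.id ℝ ℝ t ∂γ = 0 := integral_id_gaussianReal
  have hmean₁ : ∫ y, π₁ y ∂(Measure.pi fun _ ↦ γ) = 0 :=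
    (integral_eval (μ := fun _ : Fin (r ℓ) ↦ γ)).trans hmean₀
  have hmean₂ : ∫ Y, π₂ Y ∂(Measure.pi fun _ ↦ Measure.pi fun _ ↦ γ) = 0 :=
    (integral_comp_eval (μ := fun _ : Fin (dout ℓ) ↦ Measure.pi fun _ : Fin (r ℓ) ↦ γ)
      π₁.continuous.aestronglyMeasurable).trans hmean₁
  let φ₂ := φ ∘L .single ℝ _ ℓ
  let φ₁ := φ₂ ∘L .single ℝ _ i
  let φ₀ := φ₁ ∘L .single ℝ _ k
  calc ∫ R, φ R * R ℓ i k ∂gaussBlocks dout r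
      = ∫ Y, φ₂ Y * π₂ Y ∂(Measure.pi fun _ ↦ Measure.pi fun _ ↦ γ) :=
        integral_clm_mul_clm_eval_pi (fun ℓ ↦ hblock (dout ℓ) (r ℓ)) φ ℓ π₂ hmean₂
    _ = ∫ y, φ₁ y * π₁ y ∂(Measure.pi fun _ ↦ γ) :=
        integral_clm_mul_clm_eval_pi (fun _ ↦ hrow (r ℓ)) φ₂ i π₁ hmean₁
    _ = ∫ t, φ₀ t * t ∂γ :=
        integral_clm_mul_clm_eval_pi (fun _ ↦ hentry) φ₁ k (.id ℝ ℝ) hmean₀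
    _ = φ₀ 1 * ∫ t, t * t ∂γ := by
        rw [← integral_const_mul]
        congr with t
        rw [← mul_assoc, mul_comm (φ₀ 1), ← smul_eq_mul t, ← map_smul, smul_eq_mul, mul_one]
    _ = φ (Pi.single ℓ (Pi.single i (Pi.single k 1))) := by
        rw [integral_mul_self_gaussianReal_zero_one, mul_one]
        rfl

theorem integrable_clm_mul_apply_gaussBlocks
    (φ : ((ℓ : Fin L) → Fin (dout ℓ) → Fin (r ℓ) → ℝ) →L[ℝ] ℝ)
    (ℓ : Fin L) (i : Fin (dout ℓ)) (k : Fin (r ℓ)) :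
    Integrable (fun R ↦ φ R * R ℓ i k) (gaussBlocks dout r) :=
  (integrable_clm_smul_self (memLp_id_gaussBlocks 2) φ).eval ℓ |>.eval i |>.eval k

end GaussBlocks

section Agzo

theorem fderiv_single_eq_trace (f : ((ℓ : Fin L) → Matrix (Fin (dout ℓ)) (Fin (din ℓ)) ℝ) → ℝ)
    (W : (ℓ : Fin L) → Matrix (Fin (dout ℓ)) (Fin (din ℓ)) ℝ) (ℓ : Fin L)
    (M : Matrix (Fin (dout ℓ)) (Fin (din ℓ)) ℝ) :
    fderiv ℝ f W (Pi.single ℓ M) = trace ((gradBlock f W ℓ)ᵀ * M) := by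
  suffices (fderiv ℝ f W).toLinearMap ∘ₗ LinearMap.single ℝ _ ℓ =
      traceLinearMap _ ℝ ℝ ∘ₗ mulLeftLinearMap _ ℝ (gradBlock f W ℓ)ᵀ from
    LinearMap.congr_fun this M
  refine Matrix.ext_linearMap ℝ fun i j ↦ LinearMap.ext_ring ?_
  simp [gradBlock, trace_mul_single]

/-- The AGZO perturbation `R ↦ Δ(R)` as a continuous linear map of the noise. -/
def perturbCLM (dout : Fin L → ℕ) (A : (ℓ : Fin L) → Matrix (Fin (din ℓ)) (Fin (r ℓ)) ℝ) :
    ((ℓ : Fin L) → Fin (dout ℓ) → Fin (r ℓ) → ℝ) →L[ℝ]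
      (ℓ : Fin L) → Matrix (Fin (dout ℓ)) (Fin (din ℓ)) ℝ :=
  LinearMap.toContinuousLinearMap
    { toFun := perturbA A
      map_add' := fun R S ↦ funext fun ℓ ↦ Matrix.add_mul (of (R ℓ)) (of (S ℓ)) _
      map_smul' := fun c R ↦ funext fun ℓ ↦ Matrix.smul_mul c (of (R ℓ)) _ }

theorem memLp_perturbA (A : (ℓ : Fin L) → Matrix (Fin (din ℓ)) (Fin (r ℓ)) ℝ) (p : ℝ≥0) :
    MemLp (perturbA A) p (gaussBlocks dout r) :=
  (perturbCLM dout A).comp_memLp' (memLp_id_gaussBlocks p)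

theorem norm_perturbA {A : (ℓ : Fin L) → Matrix (Fin (din ℓ)) (Fin (r ℓ)) ℝ}
    (hA : ∀ ℓ, (A ℓ)ᵀ * A ℓ = 1) (R : (ℓ : Fin L) → Fin (dout ℓ) → Fin (r ℓ) → ℝ) :
    ‖perturbA A R‖ = ‖fun ℓ ↦ of (R ℓ)‖ := by
  simp only [Pi.norm_def, ← norm_toNNReal, perturbA,
    frobenius_norm_mul_transpose_of_orthonormal (hA _)]

theorem perturbA_single (A : (ℓ : Fin L) → Matrix (Fin (din ℓ)) (Fin (r ℓ)) ℝ) (ℓ : Fin L)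
    (Y : Fin (dout ℓ) → Fin (r ℓ) → ℝ) :
    perturbA A (Pi.single ℓ Y) = Pi.single ℓ (of Y * (A ℓ)ᵀ) := by
  refine funext fun ℓ' ↦ ?_
  obtain rfl | h := eq_or_ne ℓ' ℓ
  · simp [perturbA]
  · simp [perturbA, h]

variable (f : ((ℓ : Fin L) → Matrix (Fin (dout ℓ)) (Fin (din ℓ)) ℝ) → ℝ)
  (A : (ℓ : Fin L) → Matrix (Fin (din ℓ)) (Fin (r ℓ)) ℝ)
  (W : (ℓ : Fin L) → Matrix (Fin (dout ℓ)) (Fin (din ℓ)) ℝ) (ℓ : Fin L)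

theorem fderiv_perturbA_single (i : Fin (dout ℓ)) (k : Fin (r ℓ)) :
    fderiv ℝ f W (perturbA A (Pi.single ℓ (Pi.single i (Pi.single k 1)))) =
      (gradBlock f W ℓ * A ℓ) i k := by
  have hsingle : of (Pi.single i (Pi.single k (1 : ℝ))) = Matrix.single i k 1 :=
    (single_eq_of_single_single i k (1 : ℝ)).symm
  rw [perturbA_single, fderiv_single_eq_trace, hsingle, ← Matrix.mul_assoc, trace_mul_comm,
    ← Matrix.mul_assoc, trace_mul_single, ← transpose_mul]
  simp

theorem matExp_fderiv_perturbA_smul :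
    matExp (gaussBlocks dout r) (fun R ↦ fderiv ℝ f W (perturbA A R) • perturbA A R ℓ) =
      gradBlock f W ℓ * (A ℓ * (A ℓ)ᵀ) := by
  let φ := fderiv ℝ f W ∘L perturbCLM dout A
  have hnoise : matExp (gaussBlocks dout r) (fun R ↦ φ R • of (R ℓ)) = gradBlock f W ℓ * A ℓ := by
    ext i k
    exact (integral_clm_mul_apply_gaussBlocks φ ℓ i k).trans (fderiv_perturbA_single f A W ℓ i k)
  rw [← Matrix.mul_assoc, ← hnoise,
    ← matExp_mul_const (F := fun R ↦ φ R • of (R ℓ)) fun i k ↦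
      integrable_clm_mul_apply_gaussBlocks φ ℓ i k]
  simp_rw [Matrix.smul_mul]
  rfl

theorem agzo_asymptotically_unbiased_general (dout din r : Fin L → ℕ) (ℓ : Fin L) :
    ∃ c : ℝ, 0 < c ∧
      ∀ (A : (ℓ' : Fin L) → Matrix (Fin (din ℓ')) (Fin (r ℓ')) ℝ),
        (∀ ℓ', (A ℓ')ᵀ * A ℓ' = 1) →
      ∀ (K : ℝ≥0) (f : ((ℓ' : Fin L) → Matrix (Fin (dout ℓ')) (Fin (din ℓ')) ℝ) → ℝ),
        Differentiable ℝ f → LipschitzWith K (fderiv ℝ f) →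
      ∀ (μ : ℝ), 0 < μ →
      ∀ (W : (ℓ' : Fin L) → Matrix (Fin (dout ℓ')) (Fin (din ℓ')) ℝ),
        ‖matExp (gaussBlocks dout r)
            (fun R ↦ ((f (W + μ • perturbA A R) - f W) / μ) • (of (R ℓ) * (A ℓ)ᵀ))
          - gradBlock f W ℓ * (A ℓ * (A ℓ)ᵀ)‖ ≤ c * K * μ := by
  let m₃ : ℝ := ∫ R, ‖fun ℓ' ↦ of (R ℓ')‖ ^ 3 ∂gaussBlocks dout r
  have hm₃ : 0 ≤ m₃ := integral_nonneg fun _ ↦ by positivity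
  refine ⟨m₃ + 1, add_pos_of_nonneg_of_pos hm₃ one_pos, fun A hA K f hf hK μ hμ W ↦ ?_⟩
  have hΔ : MemLp (perturbA A) 3 (gaussBlocks dout r) := memLp_perturbA A 3
  let est (R : (ℓ' : Fin L) → Fin (dout ℓ') → Fin (r ℓ') → ℝ) :=
    ((f (W + μ • perturbA A R) - f W) / μ) • perturbA A R
  let lin (R : (ℓ' : Fin L) → Fin (dout ℓ') → Fin (r ℓ') → ℝ) :=
    fderiv ℝ f W (perturbA A R) • perturbA A R
  have hest : Integrable est (gaussBlocks dout r) := integrable_twoPoint_smul hΔ hf hK hμ W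
  have hlin : Integrable lin (gaussBlocks dout r) :=
    integrable_clm_smul_self (memLp_perturbA A 2) _
  rw [← matExp_fderiv_perturbA_smul]
  calc ‖matExp (gaussBlocks dout r) (fun R ↦ est R ℓ) -
        matExp (gaussBlocks dout r) (fun R ↦ lin R ℓ)‖
      = ‖((∫ R, est R ∂gaussBlocks dout r) - ∫ R, lin R ∂gaussBlocks dout r) ℓ‖ := by
        rw [matExp_eval_eq_integral_eval hest, matExp_eval_eq_integral_eval hlin, Pi.sub_apply]
    _ ≤ ‖(∫ R, est R ∂gaussBlocks dout r) - ∫ R, lin R ∂gaussBlocks dout r‖ :=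
        norm_le_pi_norm _ ℓ
    _ ≤ K * μ * ∫ R, ‖perturbA A R‖ ^ 3 ∂gaussBlocks dout r :=
        norm_integral_twoPoint_smul_sub_le hΔ hf hK hμ W
    _ = m₃ * K * μ := by
        simp_rw [norm_perturbA hA]
        ring
    _ ≤ (m₃ + 1) * K * μ := by
        gcongr
        exact le_add_of_nonneg_right zero_le_one

end Agzo

/-- if the row space of the true layer gradient lies in `span(A_ℓ)`
(i.e., `∇_{W_ℓ} f(W)·A_ℓA_ℓᵀ = ∇_{W_ℓ} f(W)`), then the expected AGZO two-point
estimator is within `c_ℓ·Lip·μ` of the true layer gradient in Frobenius norm, with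
`c_ℓ > 0` depending only on the dimensions.  Hence AGZO is asymptotically unbiased
as `μ → 0`. -/
theorem agzo_asymptotically_unbiased
    (L : ℕ) (hL : 0 < L) (dout din r : Fin L → ℕ)
    (hdout : ∀ ℓ, 0 < dout ℓ) (hdin : ∀ ℓ, 0 < din ℓ) (hr : ∀ ℓ, 0 < r ℓ)
    (ℓ : Fin L) :
    ∃ c : ℝ, 0 < c ∧
      ∀ (A : (ℓ' : Fin L) → Matrix (Fin (din ℓ')) (Fin (r ℓ')) ℝ),
        (∀ ℓ', (A ℓ')ᵀ * A ℓ' = 1) →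
      ∀ (Lip : ℝ), 0 ≤ Lip →
      ∀ (f : ((ℓ' : Fin L) → Matrix (Fin (dout ℓ')) (Fin (din ℓ')) ℝ) → ℝ),
        Differentiable ℝ f →
        (∀ W W', ‖fderiv ℝ f W - fderiv ℝ f W'‖ ≤ Lip * ‖W - W'‖) →
      ∀ (μ : ℝ), 0 < μ →
      ∀ (W : (ℓ' : Fin L) → Matrix (Fin (dout ℓ')) (Fin (din ℓ')) ℝ),
        gradBlock f W ℓ * (A ℓ * (A ℓ)ᵀ) = gradBlock f W ℓ →
        ‖matExp (gaussBlocks dout r)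
            (fun R => ((f (W + μ • perturbA A R) - f W) / μ) •
              (Matrix.of (R ℓ) * (A ℓ)ᵀ))
          - gradBlock f W ℓ‖ ≤ c * Lip * μ := by
  obtain ⟨c, hc, hbias⟩ := agzo_asymptotically_unbiased_general dout din r ℓ
  refine ⟨c, hc, fun A hA Lip hLip f hf hfLip μ hμ W hW ↦ ?_⟩
  lift Lip to ℝ≥0 using hLip
  simpa only [hW] using hbias A hA Lip f hf (lipschitzWith_iff_norm_sub_le.2 hfLip) μ hμ W

end
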